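/- Fix t > 0, (x̂, â) ∈ ℝ² and points (x₁,a₁),…,(x_m,a_m) ∈ ℝ². Let K := { f : ℝ → ℝ 1-Lipschitz : p_{x̂,â}(t) ≤ f ≤ p_{x̂,â}(0) pointwise and f(x_j) ≤ a_j for all j }; say f ∈ K passes through j if f(x_j) = a_j. Then for any f₁,…,fₙ ∈ K: Σ_{i=1}^n I(fᵢ ∥ p_{x̂,â}(t)) ≥ inf { I(f ∥ p_{x̂,â}(t)) : f ∈ K and f passes through every j ∈ {1,…,m} that is passed through by at least one fᵢ }. Moreover the inequality is strict unless the open regions Sᵢ := { (x,y) ∈ ℝ² : p_{x̂,â}(t,x) < y < fᵢ(x) }, i = 1,…,n, are pairwise disjoint. -/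

import Mathlib

open MeasureTheory

/-- The (shifted) parabola `p(t,x)`: for `t > 0`, `p(t,x) = -t/2 - x²/(2t)` when `|x| ≤ t`
and `p(t,x) = -|x|` otherwise; also `p(0,x) = -|x|`. -/
noncomputable def parab (t x : ℝ) : ℝ :=
  if 0 < t ∧ |x| ≤ t then -t / 2 - x ^ 2 / (2 * t) else -|x|

/-- The shifted parabola `p_{x̂,â}(t,x) = p(t, x - x̂) + â`. -/
noncomputable def parabXA (xh ah t x : ℝ) : ℝ :=
  parab t (x - xh) + ah

/-- The Bernoulli entropy `H(u) = ((1+u)/2)·log(1+u) + ((1-u)/2)·log(1-u)`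
(with `0 · log 0 = 0`, as `Real.log 0 = 0`). -/
noncomputable def Hber (u : ℝ) : ℝ :=
  (1 + u) / 2 * Real.log (1 + u) + (1 - u) / 2 * Real.log (1 - u)

/-- The excess entropy `I(f ∥ p_{x̂,â}(t)) = ∫ ( H(f') - H(∂ₓ p_{x̂,â}(t,·)) )`. -/
noncomputable def excessEntropy (xh ah t : ℝ) (f : ℝ → ℝ) : ℝ :=
  ∫ y : ℝ, (Hber (deriv f y) - Hber (deriv (parabXA xh ah t) y))

/-- The admissible class `K`: 1-Lipschitz functions sandwiched between `p_{x̂,â}(t)` and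
`p_{x̂,â}(0)` and lying below all the points `(x_j, a_j)`. -/
def Kset (xh ah t : ℝ) (m : ℕ) (x a : Fin m → ℝ) : Set (ℝ → ℝ) :=
  {f | LipschitzWith 1 f ∧ (∀ y, parabXA xh ah t y ≤ f y ∧ f y ≤ parabXA xh ah 0 y) ∧
    ∀ j, f (x j) ≤ a j}

/-!
`K` is closed under pointwise maxima, and at almost every `y` the slopes of `f ⊔ g` and `f ⊓ g` are
those of `f` and `g` in some order, so the excess entropy satisfies
`I(f ⊔ g) + I(f ⊓ g) = I(f) + I(g)`. As `I ≥ 0`, the maximum of all `fᵢ` has excess entropy at most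
`∑ I(fᵢ)`, and it passes through every point that some `fᵢ` passes through. If two of the regions
meet, then `fᵢ ⊓ fᵢ'` exceeds the parabola somewhere and `I(fᵢ ⊓ fᵢ') > 0` makes the inequality
strict.

Nonnegativity and positivity of `I` come from `I(f) ≥ t⁻¹ ∫ (f - p)`, where `p = p_{x̂,â}(t)`:
convexity of `H` gives `H(f') - H(p') ≥ H'(p') (f' - p')`, and integrating by parts moves the
derivative onto `H'(p')`, which decreases at rate at least `t⁻¹`; the boundary terms vanish because
`f = p` at `x̂ ± t`.
-/

open Real Set Filter Topology

section Entropy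

variable {r u v : ℝ}

lemma mul_sub_le_sub_of_convexOn {s : Set ℝ} {f : ℝ → ℝ} {f' x y : ℝ} (hf : ConvexOn ℝ s f)
    (hx : x ∈ s) (hy : y ∈ s) (hf' : HasDerivAt f f' x) : f' * (y - x) ≤ f y - f x := by
  rcases lt_trichotomy x y with hxy | rfl | hxy
  · rw [← le_div_iff₀ (sub_pos.2 hxy), ← slope_def_field]
    exact hf.le_slope_of_hasDerivAt hx hy hxy hf'
  · simp
  · have h := hf.slope_le_of_hasDerivAt hy hx hxy hf'
    rw [slope_def_field, div_le_iff₀ (sub_pos.2 hxy)] at h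
    linarith

lemma artanh_eq_log_sub_log_div_two (hu : u ∈ Ioo (-1) 1) :
    artanh u = (log (1 + u) - log (1 - u)) / 2 := by
  rw [artanh_eq_half_log (Ioo_subset_Icc_self hu),
    log_div (by linarith [hu.1]) (by linarith [hu.2])]
  ring

lemma contDiffOn_artanh {n : WithTop ℕ∞} : ContDiffOn ℝ n artanh (Ioo (-1) 1) := by
  refine ContDiffOn.congr ?_ fun u hu => artanh_eq_log_sub_log_div_two hu
  refine ((ContDiffOn.log (by fun_prop) ?_).sub (ContDiffOn.log (by fun_prop) ?_)).div_const 2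
  · exact fun u hu => by linarith [hu.1]
  · exact fun u hu => by linarith [hu.2]

lemma hasDerivAt_artanh (hu : u ∈ Ioo (-1) 1) : HasDerivAt artanh (1 - u ^ 2)⁻¹ u := by
  have hadd : 1 + u ≠ 0 := by linarith [hu.1]
  have hsub : 1 - u ≠ 0 := by linarith [hu.2]
  have h := ((((hasDerivAt_id u).const_add 1).log hadd).sub
    (((hasDerivAt_id u).const_sub 1).log hsub)).div_const 2
  refine (h.congr_of_eventuallyEq ?_).congr_deriv ?_
  · filter_upwards [isOpen_Ioo.mem_nhds hu] with z hz using artanh_eq_log_sub_log_div_two hz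
  · rw [show 1 - u ^ 2 = (1 + u) * (1 - u) by ring, id]
    field_simp
    ring

lemma artanh_mul_nonneg (hr : 0 ≤ r) (u : ℝ) : 0 ≤ artanh (r * u) * u := by
  rcases le_total 0 u with hu | hu
  · exact mul_nonneg (artanh_nonneg (mul_nonneg hr hu)) hu
  · exact mul_nonneg_of_nonpos_of_nonpos
      (artanh_nonpos (mul_nonpos_of_nonneg_of_nonpos hr hu)) hu

lemma Hber_eq_log_two_sub_binEntropy (u : ℝ) :
    Hber u = log 2 - binEntropy ((1 + u) / 2) := by
  have half_mul_log (z : ℝ) : z / 2 * log (z / 2) = z / 2 * log z - z / 2 * log 2 := by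
    rcases eq_or_ne z 0 with rfl | hz
    · simp
    · rw [log_div hz two_ne_zero]; ring
  rw [binEntropy_eq_negMulLog_add_negMulLog_one_sub, negMulLog, negMulLog,
    show 1 - (1 + u) / 2 = (1 - u) / 2 by ring, neg_mul, neg_mul, half_mul_log, half_mul_log, Hber]
  ring

lemma continuous_Hber : Continuous Hber := by
  simp only [funext Hber_eq_log_two_sub_binEntropy]
  fun_prop

lemma convexOn_Hber : ConvexOn ℝ (Icc (-1) 1) Hber := by
  have h := strictConcave_binEntropy.concaveOn.neg.comp_affineMap
    (AffineMap.lineMap (k := ℝ) (1 / 2 : ℝ) 1)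
  refine ((h.subset ?_ (convex_Icc _ _)).add_const (log 2)).congr fun u _ => ?_
  · intro u hu
    simp only [mem_preimage, AffineMap.lineMap_apply, smul_eq_mul, vsub_eq_sub, vadd_eq_add]
    constructor <;> linarith [hu.1, hu.2]
  · rw [Hber_eq_log_two_sub_binEntropy]
    simp only [Pi.add_apply, Function.comp_apply, Pi.neg_apply, AffineMap.lineMap_apply,
      smul_eq_mul, vsub_eq_sub, vadd_eq_add]
    ring_nf

lemma hasDerivAt_Hber (hu : u ∈ Ioo (-1) 1) : HasDerivAt Hber (artanh u) u := by
  have hbin : HasDerivAt binEntropy (log (1 - (1 + u) / 2) - log ((1 + u) / 2)) ((1 + u) / 2) :=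
    hasDerivAt_binEntropy (by linarith [hu.1]) (by linarith [hu.2])
  have h := hbin.comp u (((hasDerivAt_id u).const_add 1).div_const 2)
  rw [funext Hber_eq_log_two_sub_binEntropy]
  refine (h.const_sub (log 2)).congr_deriv ?_
  rw [show 1 - (1 + u) / 2 = (1 - u) / 2 by ring, log_div (by linarith [hu.2]) two_ne_zero,
    log_div (by linarith [hu.1]) two_ne_zero, artanh_eq_log_sub_log_div_two hu]
  ring

lemma mul_mem_Ioo_of_mem_Ico (hr : r ∈ Ico 0 1) (hu : u ∈ Icc (-1) 1) :
    r * u ∈ Ioo (-1) 1 := by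
  rw [mem_Ioo, ← abs_lt, abs_mul, abs_of_nonneg hr.1]
  exact (mul_le_of_le_one_right hr.1 (abs_le.2 hu)).trans_lt hr.2

lemma artanh_mul_sub_le_Hber_sub (hr : r ∈ Ico 0 1) (hu : u ∈ Icc (-1) 1) (hv : v ∈ Icc (-1) 1) :
    artanh (r * u) * (v - u) ≤ Hber v - Hber (r * u) := by
  have hru : r * u ∈ Ioo (-1) 1 := mul_mem_Ioo_of_mem_Ico hr hu
  calc artanh (r * u) * (v - u)
      = artanh (r * u) * (v - r * u) - (1 - r) * (artanh (r * u) * u) := by ring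
    _ ≤ artanh (r * u) * (v - r * u) :=
        sub_le_self _ (mul_nonneg (sub_nonneg.2 hr.2.le) (artanh_mul_nonneg hr.1 u))
    _ ≤ Hber v - Hber (r * u) :=
        mul_sub_le_sub_of_convexOn convexOn_Hber (Ioo_subset_Icc_self hru) hv (hasDerivAt_Hber hru)

end Entropy

section Parabola

variable {t : ℝ} {xh ah y : ℝ}

lemma parab_eq (ht : 0 < t) (x : ℝ) :
    parab t x = -|x| - max (t - |x|) 0 ^ 2 / (2 * t) := by
  rcases le_or_gt |x| t with hx | hx
  · rw [parab, if_pos ⟨ht, hx⟩, max_eq_left (sub_nonneg.2 hx), ← sq_abs x]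
    field_simp
    ring
  · rw [parab, if_neg fun h => hx.not_ge h.2, max_eq_right (sub_nonpos.2 hx.le)]
    simp

lemma lipschitzWith_parab (ht : 0 < t) : LipschitzWith 1 (parab t) := by
  refine LipschitzWith.of_le_add fun x y => ?_
  have hxy : |y| - |x| ≤ dist x y := by
    rw [dist_comm, Real.dist_eq]
    exact abs_sub_abs_le_abs_sub y x
  rw [parab_eq ht, parab_eq ht]
  rcases le_total |x| |y| with h | h
  · have hsq : max (t - |y|) 0 ^ 2 / (2 * t) ≤ max (t - |x|) 0 ^ 2 / (2 * t) := by gcongr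
    linarith
  · have hmax : max (t - |y|) 0 - max (t - |x|) 0 ≤ |x| - |y| := by
      simpa [abs_of_nonneg (sub_nonneg.2 h)] using
        (le_abs_self _).trans (abs_max_sub_max_le_abs (t - |y|) (t - |x|) 0)
    have hle (z : ℝ) : max (t - |z|) 0 ≤ t := max_le (sub_le_self _ (abs_nonneg z)) ht.le
    have hsq : (max (t - |y|) 0 ^ 2 - max (t - |x|) 0 ^ 2) / (2 * t) ≤ |x| - |y| :=
      calc (max (t - |y|) 0 ^ 2 - max (t - |x|) 0 ^ 2) / (2 * t)
          = (max (t - |y|) 0 - max (t - |x|) 0) *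
              ((max (t - |y|) 0 + max (t - |x|) 0) / (2 * t)) := by ring
        _ ≤ (|x| - |y|) * 1 := by
            refine mul_le_mul hmax ?_ (by positivity) (sub_nonneg.2 h)
            rw [div_le_one (by positivity)]
            linarith [hle x, hle y]
        _ = |x| - |y| := mul_one _
    rw [sub_div] at hsq
    linarith [dist_nonneg (x := x) (y := y)]

lemma parabXA_zero_left (xh ah y : ℝ) : parabXA xh ah 0 y = -|y - xh| + ah := by
  simp [parabXA, parab]

lemma parabXA_le_parabXA_zero (ht : 0 < t) (xh ah y : ℝ) :
    parabXA xh ah t y ≤ parabXA xh ah 0 y := by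
  rw [parabXA_zero_left, parabXA, parab_eq ht]
  gcongr
  exact sub_le_self _ (by positivity)

lemma parabXA_eq_parabXA_zero (ht : 0 < t) (hy : t ≤ |y - xh|) :
    parabXA xh ah t y = parabXA xh ah 0 y := by
  rw [parabXA_zero_left, parabXA, parab_eq ht, max_eq_right (sub_nonpos.2 hy)]
  simp

lemma lipschitzWith_parabXA (ht : 0 < t) (xh ah : ℝ) : LipschitzWith 1 (parabXA xh ah t) :=
  LipschitzWith.of_dist_le_mul fun y z => by
    simpa [parabXA] using (lipschitzWith_parab ht).dist_le_mul (y - xh) (z - xh)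

lemma hasDerivAt_parabXA (hy : |y - xh| < t) :
    HasDerivAt (parabXA xh ah t) ((xh - y) / t) y := by
  have ht : 0 < t := (abs_nonneg _).trans_lt hy
  have h := (((((hasDerivAt_id y).sub_const xh).pow 2).div_const (2 * t)).const_sub
    (-t / 2)).add_const ah
  refine (h.congr_of_eventuallyEq ?_).congr_deriv ?_
  · have hnhds : ∀ᶠ z in 𝓝 y, |z - xh| < t :=
      ContinuousAt.eventually_lt (by fun_prop) continuousAt_const hy
    filter_upwards [hnhds] with z hz
    simp [parabXA, parab, ht, hz.le]
  · simp only [id, Nat.cast_ofNat, Nat.reduceSub, pow_one]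
    field_simp
    ring

end Parabola

section Calculus

lemma deriv_eq_of_le_of_eq {f g : ℝ → ℝ} {y : ℝ} (hf : DifferentiableAt ℝ f y)
    (hg : DifferentiableAt ℝ g y) (hle : f ≤ g) (heq : f y = g y) : deriv f y = deriv g y := by
  have hmin : IsLocalMin (g - f) y := Eventually.of_forall fun z => by simp [heq, hle z]
  exact (sub_eq_zero.1 (hmin.hasDerivAt_eq_zero (hg.hasDerivAt.sub hf.hasDerivAt))).symm

lemma deriv_sup_inf_of_lt {f g : ℝ → ℝ} {y : ℝ} (hf : ContinuousAt f y) (hg : ContinuousAt g y)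
    (h : f y < g y) : deriv (f ⊔ g) y = deriv g y ∧ deriv (f ⊓ g) y = deriv f y := by
  have hlt : ∀ᶠ z in 𝓝 y, f z < g z := hf.eventually_lt hg h
  constructor <;> apply EventuallyEq.deriv_eq <;> filter_upwards [hlt] with z hz
  · exact sup_of_le_right hz.le
  · exact inf_of_le_left hz.le

lemma comp_deriv_sup_add_comp_deriv_inf {M : Type*} [AddCommMagma M] (H : ℝ → M) {f g : ℝ → ℝ}
    {y : ℝ} (hf : DifferentiableAt ℝ f y) (hg : DifferentiableAt ℝ g y)
    (hsup : DifferentiableAt ℝ (f ⊔ g) y) (hinf : DifferentiableAt ℝ (f ⊓ g) y) :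
    H (deriv (f ⊔ g) y) + H (deriv (f ⊓ g) y) = H (deriv f y) + H (deriv g y) := by
  rcases lt_trichotomy (f y) (g y) with h | h | h
  · obtain ⟨hs, hi⟩ := deriv_sup_inf_of_lt hf.continuousAt hg.continuousAt h
    rw [hs, hi, add_comm]
  · rw [← deriv_eq_of_le_of_eq hf hsup le_sup_left (by simp [h]),
      deriv_eq_of_le_of_eq hinf hg inf_le_right (by simp [h])]
  · obtain ⟨hs, hi⟩ := deriv_sup_inf_of_lt hg.continuousAt hf.continuousAt h
    rw [sup_comm, inf_comm, hs, hi]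

lemma deriv_mem_Icc_of_lipschitzWith_one {f : ℝ → ℝ} (hf : LipschitzWith 1 f) (y : ℝ) :
    deriv f y ∈ Icc (-1) 1 :=
  abs_le.1 (by simpa using norm_deriv_le_of_lipschitz (x₀ := y) hf)

lemma const_mul_integral_le_integral_mul_deriv {φ w : ℝ → ℝ} {a b c : ℝ} (hab : a ≤ b)
    (hφ : AbsolutelyContinuousOnInterval φ a b) (hw : AbsolutelyContinuousOnInterval w a b)
    (hwa : w a = 0) (hwb : w b = 0) (hw_nonneg : ∀ y ∈ Icc a b, 0 ≤ w y)
    (hφ' : ∀ y ∈ Icc a b, c ≤ -deriv φ y) :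
    c * ∫ y in a..b, w y ≤ ∫ y in a..b, φ y * deriv w y := by
  have hw_int : IntervalIntegrable w volume a b := hw.continuousOn.intervalIntegrable
  rw [hφ.integral_mul_deriv_eq_deriv_mul hw, hwa, hwb, mul_zero, mul_zero, sub_zero, zero_sub,
    ← intervalIntegral.integral_const_mul, ← intervalIntegral.integral_neg]
  refine intervalIntegral.integral_mono_on hab (hw_int.const_mul c)
    (hφ.intervalIntegrable_deriv.mul_continuousOn hw.continuousOn).neg fun y hy => ?_
  rw [← neg_mul]
  exact mul_le_mul_of_nonneg_right (hφ' y hy) (hw_nonneg y hy)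

lemma intervalIntegrable_comp_deriv {H f : ℝ → ℝ} {K : NNReal} (hH : Continuous H)
    (hf : LipschitzWith K f) (a b : ℝ) :
    IntervalIntegrable (fun y => H (deriv f y)) volume a b := by
  obtain ⟨C, hC⟩ := (isCompact_closedBall (0 : ℝ) K).exists_bound_of_continuousOn hH.continuousOn
  refine (intervalIntegrable_const (c := C)).mono_fun
    (hH.measurable.comp (measurable_deriv f)).aestronglyMeasurable
    (Eventually.of_forall fun y => ?_)
  exact (hC _ (mem_closedBall_zero_iff.2 (norm_deriv_le_of_lipschitz hf))).trans (le_abs_self C)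

end Calculus

/-- The slope `H'(r ∂_y p_{x̂,â}(t,y))` of the Bernoulli entropy at a multiple of the slope of the
parabola, valid for `|y - x̂| ≤ t`; it serves as the multiplier in an integration by parts.
At `r = 1` it blows up at the endpoints `y = x̂ ± t`, which the factor `r < 1` prevents. -/
noncomputable def tiltedSlope (xh t r y : ℝ) : ℝ :=
  artanh (r * ((xh - y) / t))

section TiltedSlope

variable {xh t r y : ℝ}

lemma sub_div_mem_Icc (ht : 0 < t) (hy : y ∈ Icc (xh - t) (xh + t)) :
    (xh - y) / t ∈ Icc (-1) 1 := by
  rw [mem_Icc, le_div_iff₀ ht, div_le_one ht]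
  constructor <;> linarith [hy.1, hy.2]

lemma absolutelyContinuousOnInterval_tiltedSlope (ht : 0 < t) (hr : r ∈ Ico 0 1) :
    AbsolutelyContinuousOnInterval (tiltedSlope xh t r) (xh - t) (xh + t) := by
  apply ContDiffOn.absolutelyContinuousOnInterval
  rw [uIcc_of_le (by linarith)]
  exact contDiffOn_artanh.comp (by fun_prop)
    fun y hy => mul_mem_Ioo_of_mem_Ico hr (sub_div_mem_Icc ht hy)

lemma div_le_neg_deriv_tiltedSlope (ht : 0 < t) (hr : r ∈ Ico 0 1)
    (hy : y ∈ Icc (xh - t) (xh + t)) : r / t ≤ -deriv (tiltedSlope xh t r) y := by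
  have hmem := mul_mem_Ioo_of_mem_Ico hr (sub_div_mem_Icc ht hy)
  have hderiv : HasDerivAt (tiltedSlope xh t r)
      ((1 - (r * ((xh - y) / t)) ^ 2)⁻¹ * (r * (-1 / t))) y :=
    (hasDerivAt_artanh hmem).comp y
      ((((hasDerivAt_id y).const_sub xh).div_const t).const_mul r)
  have hone : 1 ≤ (1 - (r * ((xh - y) / t)) ^ 2)⁻¹ :=
    (one_le_inv₀ (sub_pos.2 ((sq_lt_one_iff_abs_lt_one _).2 (abs_lt.2 hmem)))).2
      (sub_le_self _ (sq_nonneg _))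
  rw [hderiv.deriv]
  calc r / t ≤ (1 - (r * ((xh - y) / t)) ^ 2)⁻¹ * (r / t) :=
        le_mul_of_one_le_left (div_nonneg hr.1 ht.le) hone
    _ = -((1 - (r * ((xh - y) / t)) ^ 2)⁻¹ * (r * (-1 / t))) := by ring

end TiltedSlope

/-- The profiles anchored at the wedge `p_{x̂,â}(0)` and evolved up to time `t`: the 1-Lipschitz
functions between `p_{x̂,â}(t)` and `p_{x̂,â}(0)`, i.e. the class `K` without anchor points. -/
structure IsWedgeProfile (xh ah t : ℝ) (f : ℝ → ℝ) : Prop where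
  lipschitzWith : LipschitzWith 1 f
  parabXA_le : parabXA xh ah t ≤ f
  le_parabXA_zero : f ≤ parabXA xh ah 0

lemma isWedgeProfile_parabXA {t : ℝ} (ht : 0 < t) (xh ah : ℝ) :
    IsWedgeProfile xh ah t (parabXA xh ah t) :=
  ⟨lipschitzWith_parabXA ht xh ah, le_rfl, parabXA_le_parabXA_zero ht xh ah⟩

namespace IsWedgeProfile

variable {xh ah t r y : ℝ} {f g : ℝ → ℝ}

lemma sup (hf : IsWedgeProfile xh ah t f) (hg : IsWedgeProfile xh ah t g) :
    IsWedgeProfile xh ah t (f ⊔ g) where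
  lipschitzWith := max_self (1 : NNReal) ▸ hf.lipschitzWith.max hg.lipschitzWith
  parabXA_le := hf.parabXA_le.trans le_sup_left
  le_parabXA_zero := sup_le hf.le_parabXA_zero hg.le_parabXA_zero

lemma inf (hf : IsWedgeProfile xh ah t f) (hg : IsWedgeProfile xh ah t g) :
    IsWedgeProfile xh ah t (f ⊓ g) where
  lipschitzWith := max_self (1 : NNReal) ▸ hf.lipschitzWith.min hg.lipschitzWith
  parabXA_le := le_inf hf.parabXA_le hg.parabXA_le
  le_parabXA_zero := inf_le_left.trans hf.le_parabXA_zero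

lemma eq_parabXA (hf : IsWedgeProfile xh ah t f) (ht : 0 < t) (hy : t ≤ |y - xh|) :
    f y = parabXA xh ah t y :=
  le_antisymm (parabXA_eq_parabXA_zero ht hy ▸ hf.le_parabXA_zero y) (hf.parabXA_le y)

lemma abs_sub_lt_of_parabXA_lt (hf : IsWedgeProfile xh ah t f) (ht : 0 < t)
    (hy : parabXA xh ah t y < f y) : |y - xh| < t :=
  lt_of_not_ge fun h => hy.ne' (hf.eq_parabXA ht h)

lemma deriv_eq_deriv_parabXA (hf : IsWedgeProfile xh ah t f) (ht : 0 < t)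
    (hy : y ∉ Icc (xh - t) (xh + t)) : deriv f y = deriv (parabXA xh ah t) y := by
  apply EventuallyEq.deriv_eq
  filter_upwards [isClosed_Icc.isOpen_compl.mem_nhds hy] with z hz
  refine hf.eq_parabXA ht (le_of_not_gt fun h => hz ?_)
  constructor <;> linarith [abs_lt.1 h]

lemma Hber_deriv_sub_eq_zero (hf : IsWedgeProfile xh ah t f) (ht : 0 < t)
    (hy : y ∉ Icc (xh - t) (xh + t)) :
    Hber (deriv f y) - Hber (deriv (parabXA xh ah t) y) = 0 := by
  rw [hf.deriv_eq_deriv_parabXA ht hy, sub_self]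

lemma integrable_Hber_deriv_sub (hf : IsWedgeProfile xh ah t f) (ht : 0 < t) :
    Integrable fun y => Hber (deriv f y) - Hber (deriv (parabXA xh ah t) y) := by
  have hint {g : ℝ → ℝ} (hg : LipschitzWith 1 g) :
      IntervalIntegrable (fun y => Hber (deriv g y)) volume (xh - t) (xh + t) :=
    intervalIntegrable_comp_deriv continuous_Hber hg _ _
  have hsub := (hint hf.lipschitzWith).sub (hint (lipschitzWith_parabXA ht xh ah))
  rw [intervalIntegrable_iff_integrableOn_Icc_of_le (by linarith)] at hsub
  rw [← integrableOn_univ]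
  exact hsub.of_forall_sdiff_eq_zero .univ fun y hy => hf.Hber_deriv_sub_eq_zero ht hy.2

lemma excessEntropy_eq_intervalIntegral (hf : IsWedgeProfile xh ah t f) (ht : 0 < t) :
    excessEntropy xh ah t f =
      ∫ y in (xh - t)..(xh + t), (Hber (deriv f y) - Hber ((xh - y) / t)) := by
  have hle : xh - t ≤ xh + t := by linarith
  calc excessEntropy xh ah t f
      = ∫ y in Icc (xh - t) (xh + t), (Hber (deriv f y) - Hber (deriv (parabXA xh ah t) y)) :=
        (setIntegral_eq_integral_of_forall_compl_eq_zero
          fun y hy => hf.Hber_deriv_sub_eq_zero ht hy).symm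
    _ = ∫ y in (xh - t)..(xh + t), (Hber (deriv f y) - Hber (deriv (parabXA xh ah t) y)) := by
        rw [integral_Icc_eq_integral_Ioc, intervalIntegral.integral_of_le hle]
    _ = ∫ y in (xh - t)..(xh + t), (Hber (deriv f y) - Hber ((xh - y) / t)) := by
        refine intervalIntegral.integral_congr_Ioo_of_le hle fun y hy => ?_
        have hy' : |y - xh| < t := abs_lt.2 ⟨by linarith [hy.1], by linarith [hy.2]⟩
        simp only [(hasDerivAt_parabXA hy').deriv]

lemma excessEntropy_sup_add_excessEntropy_inf (hf : IsWedgeProfile xh ah t f)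
    (hg : IsWedgeProfile xh ah t g) (ht : 0 < t) :
    excessEntropy xh ah t (f ⊔ g) + excessEntropy xh ah t (f ⊓ g) =
      excessEntropy xh ah t f + excessEntropy xh ah t g := by
  unfold excessEntropy
  rw [← integral_add ((hf.sup hg).integrable_Hber_deriv_sub ht)
      ((hf.inf hg).integrable_Hber_deriv_sub ht),
    ← integral_add (hf.integrable_Hber_deriv_sub ht) (hg.integrable_Hber_deriv_sub ht)]
  apply integral_congr_ae
  filter_upwards [hf.lipschitzWith.ae_differentiableAt_real,
    hg.lipschitzWith.ae_differentiableAt_real, (hf.sup hg).lipschitzWith.ae_differentiableAt_real,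
    (hf.inf hg).lipschitzWith.ae_differentiableAt_real] with y hfy hgy hsup hinf
  linarith [comp_deriv_sup_add_comp_deriv_inf Hber hfy hgy hsup hinf]

lemma lipschitzWith_sub_parabXA (hf : IsWedgeProfile xh ah t f) (ht : 0 < t) :
    LipschitzWith (1 + 1) fun y => f y - parabXA xh ah t y :=
  hf.lipschitzWith.sub (lipschitzWith_parabXA ht xh ah)

lemma absolutelyContinuousOnInterval_sub_parabXA (hf : IsWedgeProfile xh ah t f) (ht : 0 < t)
    (b c : ℝ) : AbsolutelyContinuousOnInterval (fun y => f y - parabXA xh ah t y) b c :=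
  (hf.lipschitzWith_sub_parabXA ht).lipschitzOnWith.absolutelyContinuousOnInterval

lemma integral_tiltedSlope_mul_deriv_le (hf : IsWedgeProfile xh ah t f) (ht : 0 < t)
    (hr : r ∈ Ico 0 1) :
    ∫ y in (xh - t)..(xh + t), tiltedSlope xh t r y * deriv (fun z => f z - parabXA xh ah t z) y ≤
      ∫ y in (xh - t)..(xh + t), (Hber (deriv f y) - Hber (r * ((xh - y) / t))) := by
  have hle : xh - t ≤ xh + t := by linarith
  have hslope := absolutelyContinuousOnInterval_tiltedSlope (xh := xh) ht hr
  have hgap := hf.absolutelyContinuousOnInterval_sub_parabXA ht (xh - t) (xh + t)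
  have hHber : Continuous fun y => Hber (r * ((xh - y) / t)) :=
    continuous_Hber.comp (by fun_prop)
  refine intervalIntegral.integral_mono_ae_restrict hle
    (hgap.intervalIntegrable_deriv.continuousOn_mul hslope.continuousOn)
    ((intervalIntegrable_comp_deriv continuous_Hber hf.lipschitzWith _ _).sub
      (hHber.intervalIntegrable _ _)) ?_
  rw [← restrict_Ioo_eq_restrict_Icc]
  filter_upwards [ae_restrict_of_ae hf.lipschitzWith.ae_differentiableAt_real,
    ae_restrict_mem measurableSet_Ioo] with y hfy hy
  have hy' : |y - xh| < t := abs_lt.2 ⟨by linarith [hy.1], by linarith [hy.2]⟩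
  rw [(hfy.hasDerivAt.fun_sub (hasDerivAt_parabXA hy')).deriv]
  exact artanh_mul_sub_le_Hber_sub hr (sub_div_mem_Icc ht (Ioo_subset_Icc_self hy))
    (deriv_mem_Icc_of_lipschitzWith_one hf.lipschitzWith y)

lemma div_mul_integral_sub_parabXA_le (hf : IsWedgeProfile xh ah t f) (ht : 0 < t)
    (hr : r ∈ Ico 0 1) :
    r / t * ∫ y in (xh - t)..(xh + t), (f y - parabXA xh ah t y) ≤
      ∫ y in (xh - t)..(xh + t), (Hber (deriv f y) - Hber (r * ((xh - y) / t))) := by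
  refine (const_mul_integral_le_integral_mul_deriv (by linarith)
    (absolutelyContinuousOnInterval_tiltedSlope ht hr)
    (hf.absolutelyContinuousOnInterval_sub_parabXA ht _ _) ?_ ?_ ?_ ?_).trans
    (hf.integral_tiltedSlope_mul_deriv_le ht hr)
  · exact sub_eq_zero.2 (hf.eq_parabXA ht (by simp [abs_of_pos ht]))
  · exact sub_eq_zero.2 (hf.eq_parabXA ht (by simp [abs_of_pos ht]))
  · exact fun y _ => sub_nonneg.2 (hf.parabXA_le y)
  · exact fun y hy => div_le_neg_deriv_tiltedSlope ht hr hy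

lemma inv_mul_integral_sub_parabXA_le_excessEntropy (hf : IsWedgeProfile xh ah t f) (ht : 0 < t) :
    t⁻¹ * ∫ y in (xh - t)..(xh + t), (f y - parabXA xh ah t y) ≤ excessEntropy xh ah t f := by
  have hHber : Continuous (Function.uncurry fun r y : ℝ => Hber (r * ((xh - y) / t))) :=
    continuous_Hber.comp (by fun_prop)
  have hcont : Continuous fun r : ℝ =>
      ∫ y in (xh - t)..(xh + t), (Hber (deriv f y) - Hber (r * ((xh - y) / t))) := by
    simp only [fun r => intervalIntegral.integral_sub
      (intervalIntegrable_comp_deriv continuous_Hber hf.lipschitzWith (xh - t) (xh + t))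
      ((hHber.uncurry_left r).intervalIntegrable (μ := volume) (xh - t) (xh + t))]
    exact continuous_const.sub
      (intervalIntegral.continuous_parametric_intervalIntegral_of_continuous' hHber _ _)
  have hclosed : IsClosed {r : ℝ | r / t * ∫ y in (xh - t)..(xh + t), (f y - parabXA xh ah t y) ≤
      ∫ y in (xh - t)..(xh + t), (Hber (deriv f y) - Hber (r * ((xh - y) / t)))} :=
    isClosed_le (by fun_prop) hcont
  have hone : (1 : ℝ) ∈ closure (Ico 0 1) := by simp [closure_Ico]
  simpa [hf.excessEntropy_eq_intervalIntegral ht] using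
    hclosed.closure_subset_iff.2 (fun r hr => hf.div_mul_integral_sub_parabXA_le ht hr) hone

lemma excessEntropy_nonneg (hf : IsWedgeProfile xh ah t f) (ht : 0 < t) :
    0 ≤ excessEntropy xh ah t f := by
  refine le_trans (mul_nonneg (by positivity) ?_)
    (hf.inv_mul_integral_sub_parabXA_le_excessEntropy ht)
  exact intervalIntegral.integral_nonneg (by linarith) fun y _ => sub_nonneg.2 (hf.parabXA_le y)

lemma excessEntropy_pos (hf : IsWedgeProfile xh ah t f) (ht : 0 < t)
    (hy : parabXA xh ah t y < f y) : 0 < excessEntropy xh ah t f := by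
  have hyt := abs_lt.1 (hf.abs_sub_lt_of_parabXA_lt ht hy)
  refine lt_of_lt_of_le (mul_pos (by positivity) ?_)
    (hf.inv_mul_integral_sub_parabXA_le_excessEntropy ht)
  exact intervalIntegral.integral_pos (by linarith)
    (hf.lipschitzWith_sub_parabXA ht).continuous.continuousOn
    (fun z _ => sub_nonneg.2 (hf.parabXA_le z))
    ⟨y, ⟨by linarith, by linarith⟩, sub_pos.2 hy⟩

lemma excessEntropy_sup_le_add (hf : IsWedgeProfile xh ah t f) (hg : IsWedgeProfile xh ah t g)
    (ht : 0 < t) :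
    excessEntropy xh ah t (f ⊔ g) ≤ excessEntropy xh ah t f + excessEntropy xh ah t g := by
  linarith [hf.excessEntropy_sup_add_excessEntropy_inf hg ht, (hf.inf hg).excessEntropy_nonneg ht]

lemma excessEntropy_sup_lt_add (hf : IsWedgeProfile xh ah t f) (hg : IsWedgeProfile xh ah t g)
    (ht : 0 < t) (hfy : parabXA xh ah t y < f y) (hgy : parabXA xh ah t y < g y) :
    excessEntropy xh ah t (f ⊔ g) < excessEntropy xh ah t f + excessEntropy xh ah t g := by
  linarith [hf.excessEntropy_sup_add_excessEntropy_inf hg ht,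
    (hf.inf hg).excessEntropy_pos ht (lt_inf_iff.2 ⟨hfy, hgy⟩)]

end IsWedgeProfile

lemma exists_upperBound_le_add_sum {α ι M : Type*} [SemilatticeSup α] [AddCommMonoid M]
    [PartialOrder M] [IsOrderedAddMonoid M] {K : Set α} {I : α → M} (hK : SupClosed K)
    (hI : ∀ f ∈ K, ∀ g ∈ K, I (f ⊔ g) ≤ I f + I g) {g₀ : α} (hg₀ : g₀ ∈ K) {f : ι → α}
    (s : Finset ι) (hf : ∀ i ∈ s, f i ∈ K) :
    ∃ g ∈ K, g₀ ≤ g ∧ (∀ i ∈ s, f i ≤ g) ∧ I g ≤ I g₀ + ∑ i ∈ s, I (f i) := by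
  induction s using Finset.cons_induction with
  | empty => exact ⟨g₀, hg₀, le_rfl, by simp, by simp⟩
  | cons i s hi ih =>
    obtain ⟨hfi, hfs⟩ := (Finset.forall_mem_cons hi _).1 hf
    obtain ⟨g, hg, hg₀g, hfg, hIg⟩ := ih hfs
    refine ⟨f i ⊔ g, hK hfi hg, le_sup_of_le_right hg₀g,
      (Finset.forall_mem_cons hi _).2 ⟨le_sup_left, fun k hk => le_sup_of_le_right (hfg k hk)⟩, ?_⟩
    calc I (f i ⊔ g) ≤ I (f i) + I g := hI _ hfi _ hg
      _ ≤ I (f i) + (I g₀ + ∑ k ∈ s, I (f k)) := by gcongr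
      _ = I g₀ + ∑ k ∈ s.cons i hi, I (f k) := by rw [Finset.sum_cons, add_left_comm]

/-- The class `K` of wedge profiles lying below the points `(x_j, a_j)`, for an arbitrary (possibly
infinite) index type of points. -/
def admissibleProfiles {κ : Type*} (xh ah t : ℝ) (x a : κ → ℝ) : Set (ℝ → ℝ) :=
  {f | IsWedgeProfile xh ah t f ∧ ∀ j, f (x j) ≤ a j}

lemma Kset_eq_admissibleProfiles (xh ah t : ℝ) (m : ℕ) (x a : Fin m → ℝ) :
    Kset xh ah t m x a = admissibleProfiles xh ah t x a := by
  ext f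
  constructor
  · exact fun ⟨hlip, hbd, ha⟩ => ⟨⟨hlip, fun y => (hbd y).1, fun y => (hbd y).2⟩, ha⟩
  · exact fun ⟨⟨hlip, hlo, hhi⟩, ha⟩ => ⟨hlip, fun y => ⟨hlo y, hhi y⟩, ha⟩

section Combination

variable {ι κ : Type*} {xh ah t : ℝ} {x a : κ → ℝ} {f : ι → ℝ → ℝ} {g : ℝ → ℝ}

lemma supClosed_admissibleProfiles : SupClosed (admissibleProfiles xh ah t x a) :=
  fun _ hf _ hg => ⟨hf.1.sup hg.1, fun j => sup_le (hf.2 j) (hg.2 j)⟩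

lemma parabXA_mem_admissibleProfiles (ht : 0 < t) (hg : g ∈ admissibleProfiles xh ah t x a) :
    parabXA xh ah t ∈ admissibleProfiles xh ah t x a :=
  ⟨isWedgeProfile_parabXA ht xh ah, fun j => (hg.1.parabXA_le (x j)).trans (hg.2 j)⟩

lemma excessEntropy_parabXA (xh ah t : ℝ) : excessEntropy xh ah t (parabXA xh ah t) = 0 := by
  simp [excessEntropy]

lemma sInf_excessEntropy_le (ht : 0 < t) (hg : g ∈ admissibleProfiles xh ah t x a)
    (hfg : ∀ i, f i ≤ g) :
    sInf {r : ℝ | ∃ g ∈ admissibleProfiles xh ah t x a,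
      (∀ j, (∃ i, f i (x j) = a j) → g (x j) = a j) ∧ r = excessEntropy xh ah t g} ≤
      excessEntropy xh ah t g := by
  refine csInf_le ⟨0, ?_⟩ ⟨g, hg, ?_, rfl⟩
  · rintro r ⟨h, hh, -, rfl⟩
    exact hh.1.excessEntropy_nonneg ht
  · rintro j ⟨i, hij⟩
    exact le_antisymm (hg.2 j) (hij ▸ hfg i (x j))

variable [Fintype ι]

lemma exists_upperBound_excessEntropy_le_sum (ht : 0 < t)
    (hK : (admissibleProfiles xh ah t x a).Nonempty)
    (hf : ∀ i, f i ∈ admissibleProfiles xh ah t x a) :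
    ∃ g ∈ admissibleProfiles xh ah t x a, (∀ i, f i ≤ g) ∧
      excessEntropy xh ah t g ≤ ∑ i, excessEntropy xh ah t (f i) := by
  obtain ⟨h, hh⟩ := hK
  obtain ⟨g, hg, -, hfg, hle⟩ := exists_upperBound_le_add_sum supClosed_admissibleProfiles
    (fun _ hf _ hg => hf.1.excessEntropy_sup_le_add hg.1 ht)
    (parabXA_mem_admissibleProfiles ht hh) Finset.univ fun i _ => hf i
  rw [excessEntropy_parabXA, zero_add] at hle
  exact ⟨g, hg, fun i => hfg i (Finset.mem_univ i), hle⟩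

lemma exists_upperBound_excessEntropy_lt_sum (ht : 0 < t)
    (hf : ∀ i, f i ∈ admissibleProfiles xh ah t x a) {i i' : ι} (hii' : i ≠ i') {y : ℝ}
    (hi : parabXA xh ah t y < f i y) (hi' : parabXA xh ah t y < f i' y) :
    ∃ g ∈ admissibleProfiles xh ah t x a, (∀ k, f k ≤ g) ∧
      excessEntropy xh ah t g < ∑ k, excessEntropy xh ah t (f k) := by
  classical
  obtain ⟨g, hg, hsup, hfg, hle⟩ := exists_upperBound_le_add_sum supClosed_admissibleProfiles
    (fun _ hf _ hg => hf.1.excessEntropy_sup_le_add hg.1 ht)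
    (supClosed_admissibleProfiles (hf i) (hf i')) {i, i'}ᶜ fun k _ => hf k
  refine ⟨g, hg, fun k => ?_, ?_⟩
  · by_cases hk : k ∈ ({i, i'} : Finset ι)
    · rcases Finset.mem_insert.1 hk with rfl | hk
      · exact le_sup_left.trans hsup
      · exact Finset.mem_singleton.1 hk ▸ le_sup_right.trans hsup
    · exact hfg k (Finset.mem_compl.2 hk)
  · rw [← Finset.sum_add_sum_compl {i, i'}, Finset.sum_pair hii']
    exact hle.trans_lt (by gcongr; exact (hf i).1.excessEntropy_sup_lt_add (hf i').1 ht hi hi')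

theorem excessEntropy_combination_general (ht : 0 < t)
    (hf : ∀ i, f i ∈ admissibleProfiles xh ah t x a) :
    (sInf {r : ℝ | ∃ g ∈ admissibleProfiles xh ah t x a,
        (∀ j, (∃ i, f i (x j) = a j) → g (x j) = a j) ∧ r = excessEntropy xh ah t g}
      ≤ ∑ i, excessEntropy xh ah t (f i)) ∧
    ((¬ Pairwise fun i i' =>
        Disjoint {p : ℝ × ℝ | parabXA xh ah t p.1 < p.2 ∧ p.2 < f i p.1}
          {p : ℝ × ℝ | parabXA xh ah t p.1 < p.2 ∧ p.2 < f i' p.1}) →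
      sInf {r : ℝ | ∃ g ∈ admissibleProfiles xh ah t x a,
          (∀ j, (∃ i, f i (x j) = a j) → g (x j) = a j) ∧ r = excessEntropy xh ah t g}
        < ∑ i, excessEntropy xh ah t (f i)) := by
  constructor
  -- If `K` is empty, there are no `f i`, and `sInf ∅ = 0` is the empty sum.
  · rcases (admissibleProfiles xh ah t x a).eq_empty_or_nonempty with hK | hK
    · simpa [hK] using Finset.sum_nonneg fun i _ => (hf i).1.excessEntropy_nonneg ht
    · obtain ⟨g, hg, hfg, hle⟩ := exists_upperBound_excessEntropy_le_sum ht hK hf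
      exact (sInf_excessEntropy_le ht hg hfg).trans hle
  · intro hdisj
    simp only [Pairwise, not_forall, Set.not_disjoint_iff] at hdisj
    obtain ⟨i, i', hii', p, hp, hp'⟩ := hdisj
    obtain ⟨g, hg, hfg, hlt⟩ := exists_upperBound_excessEntropy_lt_sum ht hf hii'
      (hp.1.trans hp.2) (hp'.1.trans hp'.2)
    exact (sInf_excessEntropy_le ht hg hfg).trans_lt hlt

end Combination

/-- Lemma 6.3 (l.repeat): several admissible profiles anchored at the same wedge can be
combined into a single admissible profile passing through all their anchor points without
increasing the total excess entropy; the inequality is strict unless the open regions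
between the profiles and the parabola are pairwise disjoint. -/
theorem excessEntropy_combination
    (t : ℝ) (ht : 0 < t) (xh ah : ℝ) (m : ℕ) (x a : Fin m → ℝ)
    (n : ℕ) (f : Fin n → ℝ → ℝ) (hf : ∀ i, f i ∈ Kset xh ah t m x a) :
    (sInf {r : ℝ | ∃ g ∈ Kset xh ah t m x a,
        (∀ j, (∃ i, f i (x j) = a j) → g (x j) = a j) ∧ r = excessEntropy xh ah t g}
      ≤ ∑ i, excessEntropy xh ah t (f i)) ∧
    ((¬ Pairwise fun i i' =>
        Disjoint {p : ℝ × ℝ | parabXA xh ah t p.1 < p.2 ∧ p.2 < f i p.1}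
          {p : ℝ × ℝ | parabXA xh ah t p.1 < p.2 ∧ p.2 < f i' p.1}) →
      sInf {r : ℝ | ∃ g ∈ Kset xh ah t m x a,
          (∀ j, (∃ i, f i (x j) = a j) → g (x j) = a j) ∧ r = excessEntropy xh ah t g}
        < ∑ i, excessEntropy xh ah t (f i)) := by
  simp only [Kset_eq_admissibleProfiles] at hf ⊢
  exact excessEntropy_combination_general ht hf
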